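/- Under assumption (B2), the function q is independent of the mass distribution: for all words v, w ∈ 𝒲, the value q(v,w) computed from m equals the value q_hom(v,w) computed from the uniform mass distribution m_hom(a) = 1/N (with the same relation ∼). -/

import Mathlib

open Classical

namespace Martin

/-- Finite words over the alphabet `Fin N` (the empty list is the empty word `∅`;
`w ++ [i]` is the word `wi` and `w.dropLast` is the parent `w⁻`). -/
abbrev Word (N : ℕ) := List (Fin N)

/-- The mass of a word: `m(w₁⋯wₙ) = m(w₁)⋯m(wₙ)`, `m(∅) = 1`. -/
noncomputable def mW {N : ℕ} (m : Fin N → ℝ) (w : Word N) : ℝ := (w.map m).prod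

/-- Total mass of the equivalence class of `v`: `Σ_{v̂ ∼ v} m(v̂)`. -/
noncomputable def massCl {N : ℕ} (sim : Word N → Word N → Prop) (m : Fin N → ℝ)
    (v : Word N) : ℝ :=
  ∑ᶠ u ∈ {u : Word N | sim u v}, mW m u

/-- Transition probability: `p(v,w) = m(w)/(Σ_{v̂∼v} m(v̂))` if `w = v̂i` for some
`v̂ ∼ v`, `i ∈ 𝒜`, and `0` otherwise. -/
noncomputable def pTrans {N : ℕ} (sim : Word N → Word N → Prop) (m : Fin N → ℝ)
    (v w : Word N) : ℝ :=
  if ∃ v' : Word N, ∃ i : Fin N, sim v' v ∧ w = v' ++ [i] then mW m w / massCl sim m v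
  else 0

/-- `n`-step transition probabilities: `p₀(v,w) = δ_v(w)`,
`pₙ(v,w) = Σ_u pₙ₋₁(v,u) p(u,w)`. -/
noncomputable def pn {N : ℕ} (sim : Word N → Word N → Prop) (m : Fin N → ℝ) :
    ℕ → Word N → Word N → ℝ
  | 0, v, w => if w = v then 1 else 0
  | n + 1, v, w => ∑ᶠ u : Word N, pn sim m n v u * pTrans sim m u w

/-- The Green function `g(v,w) = p_{|w|−|v|}(v,w)` (it equals `0` when `|w| < |v|`,
by truncated subtraction and since then `v ≠ w`). -/
noncomputable def green {N : ℕ} (sim : Word N → Word N → Prop) (m : Fin N → ℝ)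
    (v w : Word N) : ℝ :=
  pn sim m (w.length - v.length) v w

/-- The function `q(v,w) = g(v,w)·(Σ_{v̂∼v} m(v̂))/m(w)` for `v ≠ w`, `q(v,v) = 1`. -/
noncomputable def qfun {N : ℕ} (sim : Word N → Word N → Prop) (m : Fin N → ℝ)
    (v w : Word N) : ℝ :=
  if v = w then 1 else green sim m v w * massCl sim m v / mW m w

/-- The Martin kernel `k(v,w) = g(v,w)/g(∅,w)`. -/
noncomputable def mkernel {N : ℕ} (sim : Word N → Word N → Prop) (m : Fin N → ℝ)
    (v w : Word N) : ℝ :=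
  green sim m v w / green sim m [] w

/-- `R(w)`: the number of words equivalent to `w`. -/
noncomputable def Rnum {N : ℕ} (sim : Word N → Word N → Prop) (w : Word N) : ℕ :=
  Set.ncard {u : Word N | sim u w}

/-- Assumption (B2): for every word `w`, either all equivalent words have the same mass,
or all equivalent words have equivalent parents. -/
def B2 {N : ℕ} (sim : Word N → Word N → Prop) (m : Fin N → ℝ) : Prop :=
  ∀ w : Word N, (∀ w', sim w' w → mW m w' = mW m w) ∨
    (∀ w', sim w' w → sim w'.dropLast w.dropLast)


/-!
Write `qₙ(v,w) = pₙ(v,w)·(Σ_{v̂∼v} m(v̂))/m(w)`. The recursion for `pₙ` becomes an averaging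
recursion: for `w ≠ ∅`, the value `qₙ₊₁(v,w)` is the `m`-weighted mean of `qₙ(v,·)` over the
equivalence class of the parent `w⁻`. In particular `q₁(v,w)` is `1` or `0` according to whether
`v ∼ w⁻`, and for `n ≥ 1` the value `qₙ(v,w)` depends on `w` only through the class of `w⁻`.
A weighted mean ignores its weights when the weights are constant or when the averaged function is,
and on each class (B2) grants one of the two: equal masses, or equivalent parents and hence a
constant `qₙ(v,·)`. So the mass drops out by induction on `n`.
-/

section CenterMass

variable {R E ι : Type*} [Field R] [AddCommGroup E] [Module R E]

theorem centerMass_eq_of_forall_eq {t : Finset ι} {w : ι → R} {z : ι → E} {e : E}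
    (hw : ∑ i ∈ t, w i ≠ 0) (hz : ∀ i ∈ t, z i = e) : t.centerMass w z = e := by
  rw [Finset.centerMass_congr_fun (z' := Function.const ι e) (fun i hi _ => hz i hi),
    Finset.centerMass_const hw]

theorem centerMass_eq_centerMass_one {t : Finset ι} {w : ι → R} {z : ι → E} {c : R}
    (hc : c ≠ 0) (hw : ∀ i ∈ t, w i = c) : t.centerMass w z = t.centerMass (1 : ι → R) z := by
  rw [Finset.centerMass_congr_weights (w' := c • (1 : ι → R)) (by simpa using hw),
    Finset.centerMass_smul_left (hc := hc)]

end CenterMass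

section Mass

variable {N : ℕ} {sim : Word N → Word N → Prop} {m : Fin N → ℝ}

theorem mW_pos (hm : ∀ a, 0 < m a) (w : Word N) : 0 < mW m w :=
  List.prod_pos (by simpa using fun a _ => hm a)

theorem mW_const (c : ℝ) (w : Word N) : mW (fun _ => c) w = c ^ w.length := by
  simp [mW]

theorem B2_const (hlen : ∀ v w : Word N, sim v w → v.length = w.length) (c : ℝ) :
    B2 sim (fun _ => c) :=
  fun w => .inl fun w' h => by rw [mW_const, mW_const, hlen w' w h]

theorem massCl_congr (hsim : Equivalence sim) {v w : Word N} (h : sim v w) :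
    massCl sim m v = massCl sim m w := by
  have hclass : {u | sim u v} = {u | sim u w} :=
    Set.ext fun u => ⟨fun hu => hsim.trans hu h, fun hu => hsim.trans hu (hsim.symm h)⟩
  rw [massCl, massCl, hclass]

/-- The equivalence class of `w` as a finset. The restriction to words of the length of `w` makes
the definition meaningful for every relation; it is vacuous when `sim` preserves lengths. -/
noncomputable def simClass (sim : Word N → Word N → Prop) (w : Word N) : Finset (Word N) :=
  {u ∈ (List.finite_length_eq (Fin N) w.length).toFinset | sim u w}

theorem mem_simClass (hlen : ∀ v w : Word N, sim v w → v.length = w.length) {u w : Word N} :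
    u ∈ simClass sim w ↔ sim u w := by
  simpa [simClass] using hlen u w

theorem simClass_congr (hsim : Equivalence sim)
    (hlen : ∀ v w : Word N, sim v w → v.length = w.length) {v w : Word N} (h : sim v w) :
    simClass sim v = simClass sim w := by
  ext u
  rw [mem_simClass hlen, mem_simClass hlen]
  exact ⟨fun hu => hsim.trans hu h, fun hu => hsim.trans hu (hsim.symm h)⟩

theorem massCl_eq_sum (hlen : ∀ v w : Word N, sim v w → v.length = w.length) (w : Word N) :
    massCl sim m w = ∑ u ∈ simClass sim w, mW m u := by
  rw [massCl, ← finsum_mem_coe_finset]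
  simp only [SetLike.mem_coe, mem_simClass hlen, Set.mem_ofPred_eq]

theorem massCl_pos (hsim : Equivalence sim)
    (hlen : ∀ v w : Word N, sim v w → v.length = w.length) (hm : ∀ a, 0 < m a) (w : Word N) :
    0 < massCl sim m w := by
  rw [massCl_eq_sum hlen]
  exact Finset.sum_pos (fun u _ => mW_pos hm u) ⟨w, (mem_simClass hlen).2 (hsim.refl w)⟩

theorem centerMass_simClass_eq {m' : Fin N → ℝ} (hsim : Equivalence sim)
    (hlen : ∀ v w : Word N, sim v w → v.length = w.length) (hm : ∀ a, 0 < m a)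
    (hm' : ∀ a, 0 < m' a) (hB2 : B2 sim m) (hB2' : B2 sim m') {f : Word N → ℝ} {x : Word N}
    (hf : ∀ u, sim u x → sim u.dropLast x.dropLast → f u = f x) :
    (simClass sim x).centerMass (mW m) f = (simClass sim x).centerMass (mW m') f := by
  by_cases hparents : ∀ u, sim u x → sim u.dropLast x.dropLast
  · have hconst : ∀ u ∈ simClass sim x, f u = f x := fun u hu =>
      have hux := (mem_simClass hlen).1 hu
      hf u hux (hparents u hux)
    have hsum {μ : Fin N → ℝ} (hμ : ∀ a, 0 < μ a) : ∑ u ∈ simClass sim x, mW μ u ≠ 0 :=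
      massCl_eq_sum (m := μ) hlen x ▸ (massCl_pos hsim hlen hμ x).ne'
    rw [centerMass_eq_of_forall_eq (hsum hm) hconst, centerMass_eq_of_forall_eq (hsum hm') hconst]
  · have hmass {μ : Fin N → ℝ} (hμ : B2 sim μ) : ∀ u ∈ simClass sim x, mW μ u = mW μ x :=
      fun u hu => (hμ x).resolve_right hparents u ((mem_simClass hlen).1 hu)
    rw [centerMass_eq_centerMass_one (mW_pos hm x).ne' (hmass hB2),
      centerMass_eq_centerMass_one (mW_pos hm' x).ne' (hmass hB2')]

end Mass

section Transition

variable {N : ℕ} {sim : Word N → Word N → Prop} {m : Fin N → ℝ}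

theorem pTrans_nil (u : Word N) : pTrans sim m u [] = 0 := by
  simp [pTrans]

theorem pTrans_of_ne_nil (hsim : Equivalence sim) (u : Word N) {w : Word N} (hw : w ≠ []) :
    pTrans sim m u w = if sim u w.dropLast then mW m w / massCl sim m w.dropLast else 0 := by
  have hchild : (∃ v' i, sim v' u ∧ w = v' ++ [i]) ↔ sim u w.dropLast := by
    constructor
    · rintro ⟨v', i, hv', rfl⟩
      simpa using hsim.symm hv'
    · exact fun h => ⟨w.dropLast, w.getLast hw, hsim.symm h, (List.dropLast_concat_getLast hw).symm⟩
  rw [pTrans, if_congr hchild rfl rfl]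
  split_ifs with h
  · rw [massCl_congr hsim h]
  · rfl

theorem pn_succ_nil (n : ℕ) (v : Word N) : pn sim m (n + 1) v [] = 0 := by
  simp [pn, pTrans_nil]

theorem pn_succ_of_ne_nil (hsim : Equivalence sim)
    (hlen : ∀ v w : Word N, sim v w → v.length = w.length) (n : ℕ) (v : Word N) {w : Word N}
    (hw : w ≠ []) :
    pn sim m (n + 1) v w =
      (∑ u ∈ simClass sim w.dropLast, pn sim m n v u) * (mW m w / massCl sim m w.dropLast) := by
  simp only [pn, pTrans_of_ne_nil hsim _ hw, mul_ite, mul_zero, ← mem_simClass hlen,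
    Finset.sum_mul]
  rw [← finsum_mem_coe_finset]
  simp only [finsum_eq_if, SetLike.mem_coe]

/-- The function `q` at the `n`-step level: the Green function `p_{|w|-|v|}(v,w)` is replaced by
`pₙ(v,w)` for arbitrary `n`. -/
noncomputable def qn (sim : Word N → Word N → Prop) (m : Fin N → ℝ) (n : ℕ) (v w : Word N) : ℝ :=
  pn sim m n v w * massCl sim m v / mW m w

theorem qfun_of_ne {v w : Word N} (h : v ≠ w) :
    qfun sim m v w = qn sim m (w.length - v.length) v w :=
  if_neg h

theorem qn_zero_of_ne {v w : Word N} (h : v ≠ w) : qn sim m 0 v w = 0 := by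
  simp [qn, pn, h.symm]

theorem qn_succ_nil (n : ℕ) (v : Word N) : qn sim m (n + 1) v [] = 0 := by
  simp [qn, pn_succ_nil]

theorem mW_mul_qn (hm : ∀ a, 0 < m a) (n : ℕ) (v w : Word N) :
    mW m w * qn sim m n v w = pn sim m n v w * massCl sim m v :=
  mul_div_cancel₀ _ (mW_pos hm w).ne'

theorem qn_succ_of_ne_nil (hsim : Equivalence sim)
    (hlen : ∀ v w : Word N, sim v w → v.length = w.length) (hm : ∀ a, 0 < m a) (n : ℕ)
    (v : Word N) {w : Word N} (hw : w ≠ []) :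
    qn sim m (n + 1) v w = (simClass sim w.dropLast).centerMass (mW m) (qn sim m n v) := by
  have hmw := (mW_pos hm w).ne'
  simp only [Finset.centerMass, smul_eq_mul, mW_mul_qn hm, ← Finset.sum_mul, ← massCl_eq_sum hlen]
  rw [qn, pn_succ_of_ne_nil hsim hlen n v hw]
  field_simp

theorem qn_one_of_ne_nil (hsim : Equivalence sim)
    (hlen : ∀ v w : Word N, sim v w → v.length = w.length) (hm : ∀ a, 0 < m a) (v : Word N)
    {w : Word N} (hw : w ≠ []) :
    qn sim m 1 v w = if sim v w.dropLast then 1 else 0 := by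
  rw [qn_succ_of_ne_nil hsim hlen hm 0 v hw]
  simp only [Finset.centerMass, smul_eq_mul, mW_mul_qn hm, pn, ite_mul, one_mul, zero_mul,
    Finset.sum_ite_eq', mem_simClass hlen, ← massCl_eq_sum hlen, mul_ite, mul_zero]
  split_ifs with h
  · rw [massCl_congr hsim h, inv_mul_cancel₀ (massCl_pos hsim hlen hm _).ne']
  · rfl

theorem qn_succ_congr (hsim : Equivalence sim)
    (hlen : ∀ v w : Word N, sim v w → v.length = w.length) (hm : ∀ a, 0 < m a) (n : ℕ)
    (v : Word N) {w w' : Word N} (h : sim w' w) (hparent : sim w'.dropLast w.dropLast) :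
    qn sim m (n + 1) v w' = qn sim m (n + 1) v w := by
  have hlength := hlen w' w h
  rcases eq_or_ne w [] with rfl | hw
  · rw [List.length_eq_zero_iff.1 hlength]
  · have hw' : w' ≠ [] := by
      rwa [← List.length_pos_iff, hlength, List.length_pos_iff]
    rw [qn_succ_of_ne_nil hsim hlen hm n v hw', qn_succ_of_ne_nil hsim hlen hm n v hw,
      simClass_congr hsim hlen hparent]

theorem qn_succ_independent_of_mass {m' : Fin N → ℝ} (hsim : Equivalence sim)
    (hlen : ∀ v w : Word N, sim v w → v.length = w.length) (hm : ∀ a, 0 < m a)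
    (hm' : ∀ a, 0 < m' a) (hB2 : B2 sim m) (hB2' : B2 sim m') (n : ℕ) (v w : Word N) :
    qn sim m (n + 1) v w = qn sim m' (n + 1) v w := by
  induction n generalizing w with
  | zero =>
    rcases eq_or_ne w [] with rfl | hw
    · rw [qn_succ_nil, qn_succ_nil]
    · rw [qn_one_of_ne_nil hsim hlen hm v hw, qn_one_of_ne_nil hsim hlen hm' v hw]
  | succ n ih =>
    rcases eq_or_ne w [] with rfl | hw
    · rw [qn_succ_nil, qn_succ_nil]
    · rw [qn_succ_of_ne_nil hsim hlen hm _ v hw, qn_succ_of_ne_nil hsim hlen hm' _ v hw,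
        ← funext ih]
      exact centerMass_simClass_eq hsim hlen hm hm' hB2 hB2'
        fun u hu hparent => qn_succ_congr hsim hlen hm n v hu hparent

end Transition

theorem qfun_independent_of_mass_general {N : ℕ} {sim : Word N → Word N → Prop}
    (hsim : Equivalence sim) (hlen : ∀ v w : Word N, sim v w → v.length = w.length)
    {m m' : Fin N → ℝ} (hm : ∀ a, 0 < m a) (hm' : ∀ a, 0 < m' a) (hB2 : B2 sim m)
    (hB2' : B2 sim m') (v w : Word N) : qfun sim m v w = qfun sim m' v w := by
  rcases eq_or_ne v w with rfl | hvw
  · rw [qfun, qfun, if_pos rfl, if_pos rfl]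
  · rw [qfun_of_ne hvw, qfun_of_ne hvw]
    cases w.length - v.length with
    | zero => rw [qn_zero_of_ne hvw, qn_zero_of_ne hvw]
    | succ n => exact qn_succ_independent_of_mass hsim hlen hm hm' hB2 hB2' n v w

/-- Theorem 3.11, second part: under (B2) the function `q` is
independent of the mass distribution `m`: it coincides with the homogeneous one. -/
theorem qfun_independent_of_mass {N : ℕ} (hN : 2 ≤ N)
    (sim : Word N → Word N → Prop) (hsim : Equivalence sim)
    (hlen : ∀ v w : Word N, sim v w → v.length = w.length)
    (m : Fin N → ℝ) (hm : ∀ a, m a ∈ Set.Ioo (0 : ℝ) 1)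
    (hm1 : ∑ a, m a = 1) (hB2 : B2 sim m) :
    ∀ v w : Word N, qfun sim m v w = qfun sim (fun _ : Fin N => (N : ℝ)⁻¹) v w :=
  qfun_independent_of_mass_general hsim hlen (fun a => (hm a).1)
    (fun a => inv_pos.2 (Nat.cast_pos.2 a.pos)) hB2 (B2_const hlen _)

end Martin
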